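/- arXiv:2101.02950 — 2 statements merged into one kernel-verified Lean document; each statement's English description precedes it below -/
import Mathlib

section
/- Let L be an even lattice and l ∈ L a primitive isotropic vector with (l, L) = ℤ (i.e. div(l) = 1, meaning the ideal {(l,x) : x ∈ L} of ℤ is all of ℤ). Let Γ be a subgroup of O(L) containing Õ(L). If −E_{m,l} ∈ Γ for some m ∈ L_ℚ with (m,l) = 0, then −id ∈ Γ. In particular, the cusp I = ℤl is a regular 0-dimensional cusp for every such Γ. -/
/-!
Evaluating `-E_{m,l} ∈ Γ` at some `x ∈ L` with `(l,x) = 1` shows that `m + cl ∈ L` for some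
`c ∈ ℚ`. Since `E_{m,l}` depends only on `m` modulo `ℚl`, it is the transvection attached to a
vector of `L`, and such a transvection lies in `Õ(L)` because `L` is even (`eichler_sub_mem`).
Hence `E_{m,l} ∈ Γ`, and `-id = (-E_{m,l})⁻¹ E_{m,l} ∈ Γ`.
-/

noncomputable section

open LinearMap (BilinForm)

variable {V : Type*} [AddCommGroup V] [Module ℚ V]

/-- The Eichler transvection `E_{m,l}` as a linear endomorphism of `V`:
`E_{m,l}(v) = v - (m,v)•l + (l,v)•m - (1/2)(m,m)(l,v)•l`. -/
def eichler (B : BilinForm ℚ V) (m l : V) : V →ₗ[ℚ] V where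
  toFun u := u - B m u • l + B l u • m - ((1 / 2 : ℚ) * B m m * B l u) • l
  map_add' x y := by
    simp only [map_add, LinearMap.add_apply]
    module
  map_smul' a x := by
    simp only [map_smul, LinearMap.smul_apply, smul_eq_mul, RingHom.id_apply]
    module

/-- `l` is a primitive vector of the lattice `L`. -/
def IsPrimitiveIn (L : Submodule ℤ V) (l : V) : Prop :=
  l ∈ L ∧ ∀ (k : ℤ) (u : V), u ∈ L → l = k • u → k = 1 ∨ k = -1

/-- `I = ℤl` is an irregular 0-dimensional cusp for the group of isometries `S`:
`-id ∉ S` and `-E_{m,l} ∈ S` for some `m ⊥ l`. -/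
def IsIrregular (B : BilinForm ℚ V) (S : Set (V ≃ₗ[ℚ] V)) (l : V) : Prop :=
  LinearEquiv.neg ℚ ∉ S ∧
    ∃ m : V, B m l = 0 ∧ ∃ γ ∈ S, (γ : V →ₗ[ℚ] V) = -(eichler B m l)

/-- Membership in the stable orthogonal group (discriminant kernel) `Õ(L)`:
`γ` is an isometry of `B`, preserves `L` (in both directions), and acts trivially
on `L^∨/L`. -/
def MemStableOrth (B : BilinForm ℚ V) (L : Submodule ℤ V) (γ : V ≃ₗ[ℚ] V) : Prop :=
  (∀ v w : V, B (γ v) (γ w) = B v w) ∧ (∀ x ∈ L, γ x ∈ L) ∧ (∀ x ∈ L, γ⁻¹ x ∈ L) ∧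
    ∀ v : V, (∀ x ∈ L, ∃ n : ℤ, B v x = (n : ℚ)) → γ v - v ∈ L

/-- `E_{m,l}` acts trivially on `L^∨/L` as soon as `m` lies in `L + ℚl`. -/
theorem eichler_sub_mem (B : BilinForm ℚ V)
    (hsymm : ∀ x y : V, B x y = B y x) (L : Submodule ℤ V)
    (heven : ∀ x ∈ L, ∃ n : ℤ, B x x = 2 * (n : ℚ))
    {l m : V} (hl : l ∈ L) (hliso : B l l = 0) (hml : B m l = 0)
    (c : ℚ) (hw : m - c • l ∈ L) (v : V) (hv : ∀ x ∈ L, ∃ n : ℤ, B v x = (n : ℚ)) :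
    eichler B m l v - v ∈ L := by
  obtain ⟨w, rfl⟩ : ∃ w, m = w + c • l := ⟨m - c • l, by module⟩
  rw [add_sub_cancel_right] at hw
  have hwl : B w l = 0 := by simpa [hliso] using hml
  have hlw : B l w = 0 := by rw [hsymm, hwl]
  obtain ⟨a, ha⟩ := hv l hl
  obtain ⟨b, hb⟩ := hv w hw
  obtain ⟨q, hq⟩ := heven w hw
  rw [hsymm] at ha hb
  have key : eichler B (w + c • l) l v - v = a • w - (b + q * a) • l := by
    rw [← Int.cast_smul_eq_zsmul ℚ, ← Int.cast_smul_eq_zsmul ℚ]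
    simp only [eichler, LinearMap.coe_mk, AddHom.coe_mk, map_add, map_smul,
      LinearMap.add_apply, LinearMap.smul_apply, smul_eq_mul, hwl, hlw, hliso, ha, hb, hq]
    push_cast
    module
  rw [key]
  exact L.sub_mem (L.smul_mem _ hw) (L.smul_mem _ hl)

/-- for an even lattice `L`, a primitive isotropic `l ∈ L` with
`div(l) = 1`, and a group `Õ(L) ⊆ Γ ⊆ O(L)`: if `-E_{m,l} ∈ Γ` for some `m ⊥ l`,
then `-id ∈ Γ`; in particular `I = ℤl` is a regular cusp for `Γ`. -/
theorem statement7 (B : BilinForm ℚ V) [FiniteDimensional ℚ V]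
    (hsymm : ∀ x y : V, B x y = B y x)
    (hnd : LinearMap.BilinForm.Nondegenerate B)
    (L : Submodule ℤ V) (hfg : L.FG)
    (hspan : Submodule.span ℚ (L : Set V) = ⊤)
    (hint : ∀ x ∈ L, ∀ y ∈ L, ∃ n : ℤ, B x y = (n : ℚ))
    (heven : ∀ x ∈ L, ∃ n : ℤ, B x x = 2 * (n : ℚ))
    (l : V) (hprim : IsPrimitiveIn L l) (hliso : B l l = 0)
    (hdiv : ∃ x ∈ L, B l x = 1)
    (Γ : Subgroup (V ≃ₗ[ℚ] V))
    (hΓO : ∀ γ ∈ Γ, ∀ v w : V, B (γ v) (γ w) = B v w)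
    (hΓL : ∀ γ ∈ Γ, ∀ x ∈ L, γ x ∈ L)
    (hΓstable : ∀ γ : V ≃ₗ[ℚ] V, MemStableOrth B L γ → γ ∈ Γ) :
    (∀ m : V, B m l = 0 →
      (∃ γ ∈ Γ, (γ : V →ₗ[ℚ] V) = -(eichler B m l)) → LinearEquiv.neg ℚ ∈ Γ) ∧
    ¬ IsIrregular B (Γ : Set (V ≃ₗ[ℚ] V)) l := by
  have main : ∀ m : V, B m l = 0 →
      (∃ γ ∈ Γ, (γ : V →ₗ[ℚ] V) = -(eichler B m l)) → LinearEquiv.neg ℚ ∈ Γ := by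
    rintro m hml ⟨γ, hγ, hγE⟩
    have hγv : ∀ v, γ v = -(eichler B m l v) := fun v => LinearMap.congr_fun hγE v
    obtain ⟨x, hx, hlx⟩ := hdiv
    have hw : m - (B m x + 1 / 2 * B m m) • l ∈ L := by
      have h := L.sub_mem (L.neg_mem (hΓL γ hγ x hx)) hx
      rw [hγv] at h
      convert h using 1
      simp only [eichler, LinearMap.coe_mk, AddHom.coe_mk, hlx]
      module
    -- `γ * neg` is the transvection `E_{m,l}` itself, as a linear automorphism.
    have hδ : γ * LinearEquiv.neg ℚ ∈ Γ := by
      refine hΓstable _ ⟨fun v w => ?_, fun y hy => ?_, fun y hy => ?_, fun v hv => ?_⟩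
      · simpa using hΓO γ hγ v w
      · simpa using hΓL γ hγ y hy
      · have e : (γ * LinearEquiv.neg ℚ : V ≃ₗ[ℚ] V)⁻¹ y = -(γ⁻¹ y) := by
          rw [mul_inv_rev]; rfl
        rw [e]
        exact L.neg_mem (hΓL _ (Γ.inv_mem hγ) y hy)
      · have e : (γ * LinearEquiv.neg ℚ : V ≃ₗ[ℚ] V) v = eichler B m l v := by
          simp [hγv]
        rw [e]
        exact eichler_sub_mem B hsymm L heven hprim.1 hliso hml _ hw v hv
    simpa using Γ.mul_mem (Γ.inv_mem hγ) hδ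
  exact ⟨main, fun ⟨hneg, m, hml, h⟩ => hneg (main m hml h)⟩
end
end

section
/- Let L be an even lattice whose discriminant group A_L = L^∨/L is a cyclic group of order different from 8. Then Õ(L) has no irregular 0-dimensional cusp: it is not the case that −id ∉ Õ(L) and −E_{m,l} ∈ Õ(L) for some primitive isotropic l ∈ L and m ∈ L_ℚ with (m,l) = 0. (This is the content of the paper's Example for K3 surfaces: for L = 2U ⊕ mE₈ ⊕ ⟨−2d⟩, whose discriminant group is cyclic of order 2d, Õ(L) has no irregular cusp when d ≠ 4.) -/
/-!
Suppose `-E_{m,l}` lies in `Õ(L)`, so that `v + E_{m,l}(v) ∈ L` for every `v ∈ L^∨`, and let `a ≥ 0` be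
the generator of `(l, L) ⊆ ℤ`. A multiple `cl` in `L^∨` is fixed by `E_{m,l}`, so `2cl ∈ L`. Taking
`c = 1 / 4` excludes `a = 0`, and for `a ≠ 0` taking `c = 1 / a` and using that `l` is primitive
forces `a ∈ {1, 2}` (`divisor_eq_one_or_two`).

If `a = 1`, choose `f ∈ L` with `(l, f) = 1`. Then `E_{m,l} = E_{m',l}` for `m' = E_{m,l}(f) - f ∈ L`, so
`E_{m,l}` itself acts trivially on `A_L`, hence so does `-id` (`two_smul_mem_of_divisor_one`).

If `a = 2`, let `x ∈ L^∨` generate `A_L`. The class of `l / 2` is nonzero, so `(l, x)` is odd because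
`L^∨∨ = L`. Correcting `2x` by a multiple of `f ∈ L` with `(l, f) = 2` gives a vector orthogonal to `l`,
on which the transvection condition yields `8x ∈ L` (`eight_smul_mem`). As `A_L` does not have order
`8`, in fact `4x ∈ L`. Writing `l / 2 ≡ kx` mod `L` leaves two possibilities: either `2x ∈ L`, or
`2x ≡ l / 2`. The latter is impossible: with `w = 2x - l / 2 ∈ L` one has
`4(x, x) = (l, w) + (w, w)`, an even integer, and `4(x, x) = (l, x) + 2(w, x)`, an odd one
(`two_smul_mem_of_four_smul_mem`).

In all cases `2 A_L = 0`, which means `-id ∈ Õ(L)`, so the cusp is not irregular.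
-/

noncomputable section

open LinearMap (BilinForm)

variable {V : Type*} [AddCommGroup V] [Module ℚ V]

/-- The dual lattice `L^∨ = {v ∈ V : (v, L) ⊆ ℤ}` as a `ℤ`-submodule of `V`. -/
def dualLattice (B : BilinForm ℚ V) (L : Submodule ℤ V) : Submodule ℤ V where
  carrier := {v | ∀ x ∈ L, ∃ n : ℤ, B v x = (n : ℚ)}
  zero_mem' := fun x _ => ⟨0, by simp⟩
  add_mem' := by
    intro a b ha hb x hx
    obtain ⟨n, hn⟩ := ha x hx
    obtain ⟨k, hk⟩ := hb x hx
    exact ⟨n + k, by rw [map_add, LinearMap.add_apply, hn, hk]; push_cast; ring⟩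
  smul_mem' := by
    intro c a ha x hx
    obtain ⟨n, hn⟩ := ha x hx
    refine ⟨c * n, ?_⟩
    have h : (c : ℤ) • a = ((c : ℚ)) • a := (Int.cast_smul_eq_zsmul ℚ c a).symm
    rw [h, map_smul, LinearMap.smul_apply, hn, smul_eq_mul]
    push_cast
    ring

/-- The discriminant group `A_L = L^∨ / L`. -/
abbrev discGroup (B : BilinForm ℚ V) (L : Submodule ℤ V) :=
  (dualLattice B L) ⧸ (Submodule.comap (dualLattice B L).subtype L)

/-! ### Duality and the pairing -/

/-- The double dual of a lattice is the lattice itself. -/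
lemma mem_of_pairing_dual (B : BilinForm ℚ V)
    (hsymm : ∀ x y : V, B x y = B y x)
    (hnd : LinearMap.BilinForm.Nondegenerate B)
    (L : Submodule ℤ V) (hfg : L.FG) (hspan : Submodule.span ℚ (L : Set V) = ⊤)
    (w : V) (hw : ∀ v ∈ dualLattice B L, ∃ n : ℤ, B w v = n) : w ∈ L := by
  have : Submodule.IsLattice ℚ L := ⟨hfg, hspan⟩
  let b := Module.Free.chooseBasis ℤ L
  have hb : Submodule.span ℤ (Set.range (b.extendOfIsLattice ℚ)) = L := by
    have h1 : Set.range (b.extendOfIsLattice ℚ) = L.subtype '' Set.range b := by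
      rw [← Set.range_comp]
      congr 1
      funext i
      simp
    rw [h1, ← Submodule.map_span, b.span_eq, Submodule.map_top, Submodule.range_subtype]
  have hdd := BilinForm.dualSubmodule_dualSubmodule_of_basis (R := ℤ) B hnd ⟨hsymm⟩
    (b.extendOfIsLattice ℚ)
  rw [hb] at hdd
  rw [← hdd]
  intro v hv
  obtain ⟨n, hn⟩ := hw v (by
    intro x hx
    obtain ⟨n, hn⟩ := Submodule.mem_one.mp (hv x hx)
    exact ⟨n, by simpa using hn.symm⟩)
  exact Submodule.mem_one.mpr ⟨n, by simpa using hn.symm⟩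

/-- If `2 A_L = 0`, then `-id` acts trivially on `A_L`. -/
lemma neg_memStableOrth (B : BilinForm ℚ V) (L : Submodule ℤ V)
    (h : ∀ v ∈ dualLattice B L, (2 : ℤ) • v ∈ L) :
    MemStableOrth B L (LinearEquiv.neg ℚ) := by
  refine ⟨fun v w => by simp, fun x hx => by simpa using hx, fun x hx => ?_, fun v hv => ?_⟩
  · have h1 : (LinearEquiv.neg ℚ : V ≃ₗ[ℚ] V)⁻¹ x = -x := rfl
    rw [h1]
    exact neg_mem hx
  · have h1 : (LinearEquiv.neg ℚ : V ≃ₗ[ℚ] V) v - v = -((2 : ℤ) • v) := by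
      rw [LinearEquiv.neg_apply]
      module
    rw [h1]
    exact neg_mem (h v hv)

lemma eichler_apply (B : BilinForm ℚ V) (m l u : V) :
    eichler B m l u = u - B m u • l + B l u • m - ((1 / 2 : ℚ) * B m m * B l u) • l := rfl

lemma zsmul_pairing (B : BilinForm ℚ V) (k : ℤ) (x y : V) : B (k • x) y = k * B x y := by
  rw [← Int.cast_smul_eq_zsmul ℚ, map_smul, LinearMap.smul_apply, smul_eq_mul]

lemma pairing_zsmul (B : BilinForm ℚ V) (k : ℤ) (x y : V) : B x (k • y) = k * B x y := by
  rw [← Int.cast_smul_eq_zsmul ℚ, map_smul, smul_eq_mul]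

/-! ### The divisor of the isotropic vector -/

/-- A dual vector proportional to `l` is fixed by `E_{m,l}`, so its double lies in `L`. -/
lemma two_smul_mem_of_smul_dual (B : BilinForm ℚ V) (L : Submodule ℤ V) (l m : V)
    (hll : B l l = 0) (hml : B m l = 0)
    (hE : ∀ v ∈ dualLattice B L, v + eichler B m l v ∈ L)
    (c : ℚ) (hc : c • l ∈ dualLattice B L) : (2 * c) • l ∈ L := by
  have h := hE _ hc
  rw [eichler_apply, map_smul, map_smul, hll, hml] at h
  convert h using 1
  simp only [smul_eq_mul]
  module

/-- The pairing ideal `(l, L)` is `ℤ` or `2ℤ`. -/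
lemma divisor_eq_one_or_two (B : BilinForm ℚ V) (L : Submodule ℤ V)
    (hint : ∀ x ∈ L, ∀ y ∈ L, ∃ n : ℤ, B x y = (n : ℚ))
    (l m : V) (hl : IsPrimitiveIn L l) (hll : B l l = 0) (hml : B m l = 0)
    (hE : ∀ v ∈ dualLattice B L, v + eichler B m l v ∈ L) :
    (∃ f ∈ L, B l f = 1) ∨
      ((∃ f ∈ L, B l f = 2) ∧ ∀ x ∈ L, ∃ n : ℤ, B l x = 2 * n) := by
  let S : AddSubgroup ℤ :=
    { carrier := {n | ∃ x ∈ L, B l x = n}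
      zero_mem' := ⟨0, zero_mem _, by simp⟩
      add_mem' := by
        rintro p q ⟨x, hx, hp⟩ ⟨y, hy, hq⟩
        exact ⟨x + y, add_mem hx hy, by rw [map_add, hp, hq]; push_cast; rfl⟩
      neg_mem' := by
        rintro p ⟨x, hx, hp⟩
        exact ⟨-x, neg_mem hx, by rw [map_neg, hp]; push_cast; rfl⟩ }
  obtain ⟨a, ha⟩ := Int.subgroup_cyclic S
  have haS : a ∈ S := by rw [ha]; exact AddSubgroup.mem_closure_singleton_self a
  have hdiv : ∀ x ∈ L, ∃ n : ℤ, B l x = a * n := by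
    intro x hx
    obtain ⟨p, hp⟩ := hint l hl.1 x hx
    have hpS : p ∈ S := ⟨x, hx, hp⟩
    rw [ha, AddSubgroup.mem_closure_singleton] at hpS
    obtain ⟨n, hn⟩ := hpS
    exact ⟨n, by rw [hp, ← hn]; push_cast [smul_eq_mul]; ring⟩
  have two_mul_mem : ∀ c : ℚ, (∃ k : ℤ, c * a = k) → (2 * c) • l ∈ L := by
    rintro c ⟨k, hk⟩
    refine two_smul_mem_of_smul_dual B L l m hll hml hE c fun x hx => ?_
    obtain ⟨n, hn⟩ := hdiv x hx
    refine ⟨k * n, ?_⟩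
    rw [map_smul, LinearMap.smul_apply, hn, smul_eq_mul, ← mul_assoc, hk]
    push_cast
    rfl
  have hunit : (a = 1 ∨ a = -1) ∨ (a = 2 ∨ a = -2) := by
    by_cases h0 : a = 0
    · -- here every rational multiple of `l` is in the dual, in particular `l / 4`
      have h1 := two_mul_mem (1 / 4) ⟨0, by rw [h0]; simp⟩
      have h2 := hl.2 2 _ h1 (by module)
      omega
    have haQ : (a : ℚ) ≠ 0 := by exact_mod_cast h0
    have h1 := two_mul_mem (1 / a) ⟨1, by field_simp; simp⟩
    rcases Int.even_or_odd' a with ⟨k, hk | hk⟩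
    · have h2 := hl.2 k _ h1 (by
        rw [← Int.cast_smul_eq_zsmul ℚ, smul_smul]
        have : (k : ℚ) * (2 * (1 / a)) = 1 := by
          field_simp
          rw [hk]
          push_cast
          ring
        rw [this, one_smul])
      omega
    · left
      refine hl.2 a (l - k • ((2 * (1 / (a : ℚ))) • l)) (sub_mem hl.1 (L.smul_mem k h1)) ?_
      rw [← Int.cast_smul_eq_zsmul ℚ, ← Int.cast_smul_eq_zsmul ℚ, smul_sub, smul_smul, smul_smul,
        ← sub_smul]
      have : (a : ℚ) - a * k * (2 * (1 / a)) = 1 := by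
        field_simp
        rw [hk]
        push_cast
        ring
      rw [this, one_smul]
  have hneg : -a ∈ S := neg_mem haS
  obtain ⟨f, hf, hfa⟩ := haS
  obtain ⟨g, hg, hga⟩ := hneg
  rcases hunit with (h | h) | (h | h)
  · exact Or.inl ⟨f, hf, by rw [hfa, h]; simp⟩
  · exact Or.inl ⟨g, hg, by rw [hga, h]; simp⟩
  · refine Or.inr ⟨⟨f, hf, by rw [hfa, h]; simp⟩, fun x hx => ?_⟩
    obtain ⟨n, hn⟩ := hdiv x hx
    exact ⟨n, by rw [hn, h]; simp⟩
  · refine Or.inr ⟨⟨g, hg, by rw [hga, h]; simp⟩, fun x hx => ?_⟩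
    obtain ⟨n, hn⟩ := hdiv x hx
    exact ⟨-n, by rw [hn, h]; push_cast; ring⟩

/-! ### Bounding the discriminant group -/

lemma le_dualLattice (B : BilinForm ℚ V) (L : Submodule ℤ V)
    (hint : ∀ x ∈ L, ∀ y ∈ L, ∃ n : ℤ, B x y = (n : ℚ)) : L ≤ dualLattice B L :=
  fun x hx y hy => hint x hx y hy

/-- If `(l, L) = ℤ`, then `E_{m,l}` acts trivially on `A_L`, so `2 A_L = 0`. -/
lemma two_smul_mem_of_divisor_one (B : BilinForm ℚ V) (L : Submodule ℤ V)
    (hsymm : ∀ x y : V, B x y = B y x)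
    (hint : ∀ x ∈ L, ∀ y ∈ L, ∃ n : ℤ, B x y = (n : ℚ))
    (heven : ∀ x ∈ L, ∃ n : ℤ, B x x = 2 * (n : ℚ))
    (l m : V) (hl : l ∈ L) (hll : B l l = 0) (hml : B m l = 0)
    (hE : ∀ v ∈ dualLattice B L, v + eichler B m l v ∈ L)
    (f : V) (hf : f ∈ L) (hlf : B l f = 1) (v : V) (hv : v ∈ dualLattice B L) :
    (2 : ℤ) • v ∈ L := by
  have hlm : B l m = 0 := by rw [hsymm, hml]
  obtain ⟨m', hm'⟩ : ∃ m', m' = eichler B m l f - f := ⟨_, rfl⟩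
  have hm'L : m' ∈ L := by
    have h := sub_mem (hE f (le_dualLattice B L hint hf)) (L.smul_mem (2 : ℤ) hf)
    rw [hm']
    convert h using 1
    module
  -- replacing `m` by `m'` changes it by a multiple of `l` only
  obtain ⟨c, hc⟩ : ∃ c : ℚ, m' = m + c • l := by
    refine ⟨-(B m f) - 1 / 2 * B m m, ?_⟩
    rw [hm', eichler_apply, hlf]
    module
  have hEv : eichler B m l v = v - B m' v • l + B l v • m' - ((1 / 2 : ℚ) * B m' m' * B l v) • l := by
    rw [eichler_apply, hc]
    simp only [map_add, map_smul, LinearMap.add_apply, LinearMap.smul_apply, smul_eq_mul, hll, hml,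
      hlm]
    module
  obtain ⟨p, hp⟩ := hv m' hm'L
  obtain ⟨q, hq⟩ := hv l hl
  obtain ⟨s, hs⟩ := heven m' hm'L
  have h := hE v hv
  rw [hEv, hsymm m' v, hsymm l v, hp, hq, hs] at h
  have h2 := add_mem (sub_mem (add_mem h (L.smul_mem p hl)) (L.smul_mem q hm'L))
    (L.smul_mem (s * q) hl)
  convert h2 using 1
  module

/-- If `(l, L) = 2ℤ`, then `8 A_L = 0`. -/
lemma eight_smul_mem (B : BilinForm ℚ V) (L : Submodule ℤ V)
    (hsymm : ∀ x y : V, B x y = B y x)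
    (hint : ∀ x ∈ L, ∀ y ∈ L, ∃ n : ℤ, B x y = (n : ℚ))
    (l m : V) (hl : l ∈ L)
    (hE : ∀ v ∈ dualLattice B L, v + eichler B m l v ∈ L)
    (f : V) (hf : f ∈ L) (hlf : B l f = 2) (x : V) (hx : x ∈ dualLattice B L) :
    (8 : ℤ) • x ∈ L := by
  obtain ⟨r, hr⟩ := hx l hl
  obtain ⟨v, hv⟩ : ∃ v, v = (2 : ℤ) • x - r • f := ⟨_, rfl⟩
  have hvd : v ∈ dualLattice B L := by
    rw [hv]
    exact sub_mem (Submodule.smul_mem _ _ hx) (Submodule.smul_mem _ _ (le_dualLattice B L hint hf))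
  have hlv : B l v = 0 := by
    rw [hv, map_sub, pairing_zsmul, pairing_zsmul, hlf, hsymm, hr]
    push_cast
    ring
  have h := hE v hvd
  rw [eichler_apply, hlv] at h
  have h1 : (2 : ℤ) • v - B m v • l ∈ L := by
    convert h using 1
    module
  -- pairing with `f` shows that `2 (m, v)` is an integer
  obtain ⟨p, hp⟩ := hint _ h1 f hf
  obtain ⟨q, hq⟩ := hvd f hf
  rw [map_sub, LinearMap.sub_apply, zsmul_pairing, hq, map_smul, LinearMap.smul_apply, hlf,
    smul_eq_mul] at hp
  have hmv : B m v = (2 * q - p) / 2 := by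
    push_cast at hp
    linarith
  have h2 := add_mem (add_mem (L.smul_mem (2 : ℤ) h1) (L.smul_mem (2 * q - p) hl))
    (L.smul_mem (4 * r) hf)
  convert h2 using 1
  rw [hmv, hv]
  module

/-- The case `(l, L) = 2ℤ` with `A_L` cyclic, generated by `x`, and `4 A_L = 0`. -/
lemma two_smul_mem_of_four_smul_mem (B : BilinForm ℚ V) (L : Submodule ℤ V)
    (hsymm : ∀ x y : V, B x y = B y x)
    (hnd : LinearMap.BilinForm.Nondegenerate B)
    (hfg : L.FG) (hspan : Submodule.span ℚ (L : Set V) = ⊤)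
    (heven : ∀ x ∈ L, ∃ n : ℤ, B x x = 2 * (n : ℚ))
    (l : V) (hl : IsPrimitiveIn L l) (hll : B l l = 0)
    (hdiv : ∀ x ∈ L, ∃ n : ℤ, B l x = 2 * n)
    (x : V) (hx : x ∈ dualLattice B L)
    (hgen : ∀ v ∈ dualLattice B L, ∃ k : ℤ, v - k • x ∈ L)
    (h4 : (4 : ℤ) • x ∈ L) : (2 : ℤ) • x ∈ L := by
  obtain ⟨y, hy⟩ : ∃ y, y = (1 / 2 : ℚ) • l := ⟨_, rfl⟩
  have hly : l = (2 : ℤ) • y := by rw [hy]; module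
  have hyL : y ∉ L := by
    intro h
    have := hl.2 2 y h hly
    omega
  have hByl : ∀ z, B y z = B l z / 2 := by
    intro z
    rw [hy, map_smul, LinearMap.smul_apply, smul_eq_mul]
    ring
  have hyd : y ∈ dualLattice B L := by
    intro z hz
    obtain ⟨n, hn⟩ := hdiv z hz
    exact ⟨n, by rw [hByl, hn]; ring⟩
  obtain ⟨r, hr⟩ := hx l hl.1
  rw [hsymm] at hr
  have hodd : Odd r := by
    rw [← Int.not_even_iff_odd]
    rintro ⟨t, ht⟩
    -- otherwise `l / 2` would pair integrally with all of `L^∨`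
    refine hyL (mem_of_pairing_dual B hsymm hnd L hfg hspan y fun v hv => ?_)
    obtain ⟨k, hk⟩ := hgen v hv
    obtain ⟨n, hn⟩ := hyd _ hk
    refine ⟨n + k * t, ?_⟩
    rw [map_sub, pairing_zsmul, hByl x, hr, ht] at hn
    push_cast at hn ⊢
    linarith
  obtain ⟨k, hk⟩ := hgen y hyd
  obtain ⟨j, hj | hj⟩ := Int.even_or_odd' k
  · obtain ⟨i, hi | hi⟩ := Int.even_or_odd' j
    · exfalso
      apply hyL
      have h := add_mem hk (L.smul_mem i h4)
      convert h using 1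
      rw [hj, hi]
      module
    · exfalso
      obtain ⟨w, hw⟩ : ∃ w, w = (2 : ℤ) • x - y := ⟨_, rfl⟩
      have hwL : w ∈ L := by
        have h := neg_mem (add_mem hk (L.smul_mem i h4))
        rw [hw]
        convert h using 1
        rw [hj, hi]
        module
      have h2x : (2 : ℤ) • x = y + w := by rw [hw]; abel
      obtain ⟨p, hp⟩ := hdiv w hwL
      obtain ⟨q, hq⟩ := heven w hwL
      obtain ⟨s, hs⟩ := hx w hwL
      obtain ⟨t, ht⟩ := hodd
      have e1 : B ((2 : ℤ) • x) ((2 : ℤ) • x) = 2 * p + 2 * q := by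
        simp only [h2x, map_add, LinearMap.add_apply]
        rw [hsymm w y, hByl w, hByl y,
          hsymm l y, hByl l, hll, hp, hq]
        ring
      have e2 : B ((2 : ℤ) • x) ((2 : ℤ) • x) = r + 2 * s := by
        rw [pairing_zsmul, h2x, map_add, LinearMap.add_apply, hByl, hr, hsymm w x, hs]
        push_cast
        ring
      have e3 : 2 * p + 2 * q = r + 2 * s := by
        have := e1.symm.trans e2
        exact_mod_cast this
      omega
  · have h := L.smul_mem (2 : ℤ) hk
    have h2 := neg_mem (sub_mem (add_mem h (L.smul_mem j h4)) hl.1)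
    convert h2 using 1
    rw [hj, hly]
    module

/-! ### Absence of irregular cusps -/

/-- if the discriminant group `A_L` of an even lattice is cyclic of
order `≠ 8`, then the stable orthogonal group `Õ(L)` has no irregular
0-dimensional cusp. -/
theorem statement10 (B : BilinForm ℚ V) [FiniteDimensional ℚ V]
    (hsymm : ∀ x y : V, B x y = B y x)
    (hnd : LinearMap.BilinForm.Nondegenerate B)
    (L : Submodule ℤ V) (hfg : L.FG)
    (hspan : Submodule.span ℚ (L : Set V) = ⊤)
    (hint : ∀ x ∈ L, ∀ y ∈ L, ∃ n : ℤ, B x y = (n : ℚ))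
    (heven : ∀ x ∈ L, ∃ n : ℤ, B x x = 2 * (n : ℚ))
    (hcyc : IsAddCyclic (discGroup B L))
    (hcard : Nat.card (discGroup B L) ≠ 8) :
    ¬ ∃ l : V, IsPrimitiveIn L l ∧ B l l = 0 ∧
      IsIrregular B {γ : V ≃ₗ[ℚ] V | MemStableOrth B L γ} l := by
  rintro ⟨l, hl, hll, hneg, m, hml, γ, hγ, hγE⟩
  apply hneg
  refine neg_memStableOrth B L ?_
  have hE : ∀ v ∈ dualLattice B L, v + eichler B m l v ∈ L := by
    intro v hv
    have h1 := neg_mem (hγ.2.2.2 v hv)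
    have h2 : γ v = -(eichler B m l v) := LinearMap.congr_fun hγE v
    rw [h2] at h1
    convert h1 using 1
    abel
  rcases divisor_eq_one_or_two B L hint l m hl hll hml hE with ⟨f, hf, hlf⟩ | ⟨⟨f, hf, hlf⟩, hdiv⟩
  · exact two_smul_mem_of_divisor_one B L hsymm hint heven l m hl.1 hll hml hE f hf hlf
  obtain ⟨g, hg⟩ := hcyc.exists_zsmul_surjective
  obtain ⟨⟨x, hx⟩, rfl⟩ := Submodule.Quotient.mk_surjective _ g
  have hgen : ∀ v ∈ dualLattice B L, ∃ k : ℤ, v - k • x ∈ L := by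
    intro v hv
    obtain ⟨k, hk⟩ := hg (Submodule.Quotient.mk ⟨v, hv⟩)
    refine ⟨k, ?_⟩
    have h := (Submodule.Quotient.eq _).mp hk.symm
    exact h
  have h8 := eight_smul_mem B L hsymm hint l m hl.1 hE f hf hlf x hx
  -- if `4x` were not in `L`, the generator, hence `A_L`, would have order exactly `8`
  have h4 : (4 : ℤ) • x ∈ L := by
    by_contra hn4
    apply hcard
    rw [← addOrderOf_eq_card_of_forall_mem_zmultiples
      (g := (Submodule.Quotient.mk ⟨x, hx⟩ : discGroup B L)) hg]
    have key : ∀ n : ℕ, n • (Submodule.Quotient.mk ⟨x, hx⟩ : discGroup B L) = 0 ↔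
        (n : ℤ) • x ∈ L := by
      intro n
      rw [← natCast_zsmul, ← Submodule.Quotient.mk_smul, Submodule.Quotient.mk_eq_zero]
      rfl
    have : Fact (Nat.Prime 2) := ⟨Nat.prime_two⟩
    exact addOrderOf_eq_prime_pow (p := 2) (n := 2) (by rw [key]; exact hn4) (by rw [key]; exact h8)
  have h2 := two_smul_mem_of_four_smul_mem B L hsymm hnd hfg hspan heven l hl hll hdiv x hx hgen h4
  intro v hv
  obtain ⟨k, hk⟩ := hgen v hv
  have h := add_mem (L.smul_mem (2 : ℤ) hk) (L.smul_mem k h2)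
  convert h using 1
  module
end
end
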